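/- arXiv:2104.04428 — 5 statements merged into one kernel-verified Lean document; each statement's English description precedes it below -/
import Mathlib

section
/- Let K be a field, R = K[x_1, ..., x_d] a polynomial ring, and G a finite group acting linearly on R. Let S = K[x_1, ..., x_d, y_1, ..., y_d] and let I_G = ⋂_{g ∈ G} (y_1 - g(x_1), ..., y_d - g(x_d)) be the Derksen ideal in S. Then for every n ≥ 1, the n-th symbolic power of I_G satisfies I_G^{(n)} = ⋂_{g ∈ G} (y_1 - g(x_1), ..., y_d - g(x_d))^n. -/
/-!
Each component `(yᵢ - g(xᵢ))` is the ideal of the graph of the polynomial map `x ↦ g(x)`. The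
substitution `yᵢ ↦ yᵢ + g(xᵢ)` moves this graph to the coordinate space `y = 0`, where membership
in the `n`-th power of the ideal says that the order in `y` is at least `n`. Over a domain orders
add up under multiplication, so multiplying by an element outside the ideal does not change the
order: the symbolic powers of a graph ideal are its ordinary powers.

Graph ideals of distinct maps are incomparable primes, and for finitely many incomparable primes
taking symbolic powers commutes with intersection: these primes are the associated primes of the
intersection `I`, and `I` agrees with `p` after localizing at any one of them, `p`.
-/

open MvPolynomial

/-- The `n`-th symbolic power of an ideal `I`:
`I^{(n)} = ⋂_{p ∈ Ass(A/I)} (Iⁿ A_p ∩ A)`. -/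
noncomputable def symbolicPower {A : Type*} [CommRing A] (I : Ideal A) (n : ℕ) : Ideal A :=
  ⨅ (p : Ideal A) (hp : p ∈ associatedPrimes A (A ⧸ I)),
    haveI : p.IsPrime := hp.isPrime
    Ideal.comap (algebraMap A (Localization.AtPrime p))
      (Ideal.map (algebraMap A (Localization.AtPrime p)) (I ^ n))

/-- The component `(y₁ - g(x₁), …, y_d - g(x_d))` of the Derksen ideal, in
`S = K[x₁, …, x_d, y₁, …, y_d]`, where the `x`-variables are indexed by `Sum.inl`
and the `y`-variables by `Sum.inr`. -/
noncomputable def derksenComponent (K : Type*) [Field K] (d : ℕ) {G : Type*} [Group G]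
    [MulSemiringAction G (MvPolynomial (Fin d) K)] (g : G) :
    Ideal (MvPolynomial (Fin d ⊕ Fin d) K) :=
  Ideal.span (Set.range fun i : Fin d =>
    X (Sum.inr i) - rename Sum.inl (g • (X i : MvPolynomial (Fin d) K)))

/-- The Derksen ideal `I_G = ⋂_{g ∈ G} (y₁ - g(x₁), …, y_d - g(x_d))`. -/
noncomputable def derksenIdeal (K : Type*) [Field K] (d : ℕ) (G : Type*) [Group G]
    [MulSemiringAction G (MvPolynomial (Fin d) K)] :
    Ideal (MvPolynomial (Fin d ⊕ Fin d) K) :=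
  ⨅ g : G, derksenComponent K d g

lemma associatedPrimes_quotient {A M : Type*} [CommRing A] [AddCommGroup M] [Module A M]
    (N : Submodule A M) : associatedPrimes A (M ⧸ N) = N.associatedPrimes := by
  have colon_mk (x : M) : (⊥ : Submodule A (M ⧸ N)).colon {N.mkQ x} = N.colon {x} := by
    ext a
    rw [Submodule.mem_colon_singleton, Submodule.mem_colon_singleton, Submodule.mem_bot,
      ← map_smul, Submodule.mkQ_apply, Submodule.Quotient.mk_eq_zero]
  ext p
  rw [AssociatedPrimes.mem_iff, Submodule.AssociatePrimes.mem_iff, IsAssociatedPrime,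
    Submodule.isAssociatedPrime_def, Submodule.isAssociatedPrime_def]
  simp only [N.mkQ_surjective.exists, colon_mk]

section SymbolicPower

variable {A : Type*} [CommRing A]

lemma isMinimalPrimaryDecomposition_of_isAntichain {t : Finset (Ideal A)}
    (hprime : ∀ p ∈ t, p.IsPrime) (hanti : IsAntichain (· ≤ ·) (t : Set (Ideal A))) :
    Submodule.IsMinimalPrimaryDecomposition (t.inf id) t where
  inf_eq := rfl
  primary p hp := (hprime p hp).isPrimary
  distinct p hp q hq hpq := by
    simpa only [Function.onFun, Submodule.colon_univ, (hprime p hp).radical, (hprime q hq).radical]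
      using hpq
  minimal p hp hle := by
    obtain ⟨q, hq, hqp⟩ := (hprime p hp).inf_le'.1 hle
    exact Finset.ne_of_mem_erase hq (hanti.eq (Finset.mem_of_mem_erase hq) hp hqp)

lemma associatedPrimes_quotient_finsetInf {t : Finset (Ideal A)}
    (hprime : ∀ p ∈ t, p.IsPrime) (hanti : IsAntichain (· ≤ ·) (t : Set (Ideal A))) :
    associatedPrimes A (A ⧸ t.inf id) = t := by
  have radical_colon : Set.EqOn (fun p : Ideal A => (p.colon Set.univ).radical) id t :=
    fun p hp => by simp only [Submodule.colon_univ, (hprime p hp).radical, id]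
  rw [associatedPrimes_quotient, ← (isMinimalPrimaryDecomposition_of_isAntichain hprime
    hanti).image_radical_eq_associated_primes, radical_colon.image_eq, Set.image_id]

lemma mem_symbolicPower_iff {I : Ideal A} {n : ℕ} {f : A} :
    f ∈ symbolicPower I n ↔ ∀ p ∈ associatedPrimes A (A ⧸ I), ∃ s ∉ p, s * f ∈ I ^ n := by
  simp only [symbolicPower, Ideal.mem_iInf]
  refine forall₂_congr fun p hp => ?_
  have := hp.isPrime
  rw [Ideal.mem_comap, IsLocalization.algebraMap_mem_map_algebraMap_iff p.primeCompl]
  rfl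

lemma mem_symbolicPower_iff_of_isPrime {p : Ideal A} (hp : p.IsPrime) {n : ℕ} {f : A} :
    f ∈ symbolicPower p n ↔ ∃ s ∉ p, s * f ∈ p ^ n := by
  have associatedPrimes_eq : associatedPrimes A (A ⧸ p) = {p} := by
    have := associatedPrimes_quotient_finsetInf (t := {p}) (by simpa using hp) (by simp)
    rwa [Finset.inf_singleton, id, Finset.coe_singleton] at this
  simp [mem_symbolicPower_iff, associatedPrimes_eq]

lemma exists_notMem_span_singleton_mul_le_finsetInf {t : Finset (Ideal A)}
    (hprime : ∀ p ∈ t, p.IsPrime) (hanti : IsAntichain (· ≤ ·) (t : Set (Ideal A)))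
    {p : Ideal A} (hp : p ∈ t) : ∃ u ∉ p, Ideal.span {u} * p ≤ t.inf id := by
  classical
  obtain ⟨u, hu, hup⟩ := SetLike.not_le_iff_exists.1
    ((isMinimalPrimaryDecomposition_of_isAntichain hprime hanti).minimal hp)
  refine ⟨u, hup, ?_⟩
  calc Ideal.span {u} * p
    _ ≤ (t.erase p).inf id * p :=
      Ideal.mul_mono_left ((Ideal.span_singleton_le_iff_mem _).2 hu)
    _ ≤ p ⊓ (t.erase p).inf id := Ideal.mul_le_inf.trans_eq (inf_comm _ _)
    _ = (insert p (t.erase p)).inf id := by rw [Finset.inf_insert, id]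
    _ = t.inf id := by rw [Finset.insert_erase hp]

lemma symbolicPower_finsetInf {t : Finset (Ideal A)} (hprime : ∀ p ∈ t, p.IsPrime)
    (hanti : IsAntichain (· ≤ ·) (t : Set (Ideal A))) (n : ℕ) :
    symbolicPower (t.inf id) n = t.inf (symbolicPower · n) := by
  ext f
  rw [mem_symbolicPower_iff, associatedPrimes_quotient_finsetInf hprime hanti,
    Submodule.mem_finsetInf]
  refine forall₂_congr fun p hp => ?_
  rw [mem_symbolicPower_iff_of_isPrime (hprime p hp)]
  constructor
  · rintro ⟨s, hs, hsf⟩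
    exact ⟨s, hs, Ideal.pow_right_mono (Finset.inf_le hp) n hsf⟩
  · rintro ⟨s, hs, hsf⟩
    obtain ⟨u, hu, hle⟩ := exists_notMem_span_singleton_mul_le_finsetInf hprime hanti hp
    have pow_le : Ideal.span {u ^ n} * p ^ n ≤ t.inf id ^ n := by
      simpa only [mul_pow, Ideal.span_singleton_pow] using Ideal.pow_right_mono hle n
    refine ⟨u ^ n * s, (hprime p hp).mul_notMem (mt ((hprime p hp).mem_of_pow_mem n) hu) hs, ?_⟩
    rw [mul_assoc]
    exact pow_le (Ideal.mul_mem_mul (Ideal.mem_span_singleton_self _) hsf)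

lemma symbolicPower_iInf {ι : Type*} [Finite ι] {P : ι → Ideal A}
    (hprime : ∀ i, (P i).IsPrime) (hanti : IsAntichain (· ≤ ·) (Set.range P)) (n : ℕ) :
    symbolicPower (⨅ i, P i) n = ⨅ i, symbolicPower (P i) n := by
  classical
  have := Fintype.ofFinite ι
  simpa [Finset.inf_image, Finset.inf_univ_eq_iInf, Function.comp_def] using
    symbolicPower_finsetInf (t := Finset.univ.image P) (by simpa using hprime) (by simpa) n

end SymbolicPower

section IdealOfVars

variable {σ R : Type*} [CommRing R]

lemma mem_pow_idealOfVars_iff_le_order {n : ℕ} {f : MvPolynomial σ R} :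
    f ∈ idealOfVars σ R ^ n ↔ n ≤ (f : MvPowerSeries σ R).order := by
  rw [mem_pow_idealOfVars_iff']
  constructor
  · exact fun h => MvPowerSeries.nat_le_order fun x hx => (coeff_coe f x).trans (h x hx)
  · intro h x hx
    rw [← coeff_coe]
    exact MvPowerSeries.coeff_of_lt_order (lt_of_lt_of_le (by exact_mod_cast hx) h)

lemma mem_pow_idealOfVars_of_mul_mem [IsDomain R] {n : ℕ} {s f : MvPolynomial σ R}
    (hs : s ∉ idealOfVars σ R) (h : s * f ∈ idealOfVars σ R ^ n) : f ∈ idealOfVars σ R ^ n := by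
  have order_eq_zero : (s : MvPowerSeries σ R).order = 0 := by
    rwa [← pow_one (idealOfVars σ R), mem_pow_idealOfVars_iff_le_order, Nat.cast_one,
      Order.one_le_iff_ne_zero, not_not] at hs
  rw [mem_pow_idealOfVars_iff_le_order] at h ⊢
  rwa [coe_mul, MvPowerSeries.order_mul, order_eq_zero, zero_add] at h

end IdealOfVars

section GraphIdeal

variable {σ τ R : Type*} [CommRing R]

/-- The ideal `(yᵢ - qᵢ(x))` of the graph of the polynomial map `y = q(x)`. As in
`derksenComponent`, `Sum.inl` indexes the variables `x` and `Sum.inr` the variables `y`. -/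
noncomputable def graphIdeal (q : τ → MvPolynomial σ R) : Ideal (MvPolynomial (σ ⊕ τ) R) :=
  Ideal.span (Set.range fun i => X (Sum.inr i) - rename Sum.inl (q i))

lemma X_sub_rename_mem_graphIdeal (q : τ → MvPolynomial σ R) (i : τ) :
    X (Sum.inr i) - rename Sum.inl (q i) ∈ graphIdeal q :=
  Ideal.subset_span (Set.mem_range_self i)

lemma aeval_C_X (f : MvPolynomial σ R) :
    aeval (fun i => C (X i)) f = (C f : MvPolynomial τ (MvPolynomial σ R)) :=
  (aeval_algebraMap_apply _ (X : σ → MvPolynomial σ R) f).trans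
    (congrArg C (aeval_X_left_apply f))

/-- The change of coordinates `R[x, y] ≃ R[x][y]`, `yᵢ ↦ yᵢ + qᵢ(x)`, which straightens the graph
of `q` to `y = 0`. -/
noncomputable def graphEquiv (q : τ → MvPolynomial σ R) :
    MvPolynomial (σ ⊕ τ) R ≃ₐ[R] MvPolynomial τ (MvPolynomial σ R) :=
  AlgEquiv.ofAlgHom
    (aeval (Sum.elim (fun i => C (X i)) fun i => X i + C (q i)))
    (aevalTower (rename Sum.inl) fun i => X (Sum.inr i) - rename Sum.inl (q i))
    (by ext i <;> simp [aeval_rename, Sum.elim_comp_inl, aeval_C_X])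
    (by ext (i | i) <;> simp)

lemma map_graphEquiv_graphIdeal (q : τ → MvPolynomial σ R) :
    (graphIdeal q).map (graphEquiv q) = idealOfVars τ (MvPolynomial σ R) := by
  have graphEquiv_generator (i : τ) :
      graphEquiv q (X (Sum.inr i) - rename Sum.inl (q i)) = X i := by
    rw [← AlgEquiv.eq_symm_apply]
    simp [graphEquiv]
  rw [graphIdeal, Ideal.map_span, ← Set.range_comp]
  congr 2
  exact funext graphEquiv_generator

lemma mem_graphIdeal_pow_iff {q : τ → MvPolynomial σ R} {n : ℕ} {f : MvPolynomial (σ ⊕ τ) R} :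
    f ∈ graphIdeal q ^ n ↔ graphEquiv q f ∈ idealOfVars τ (MvPolynomial σ R) ^ n := by
  rw [← map_graphEquiv_graphIdeal q, ← Ideal.map_pow]
  exact (Ideal.apply_mem_of_equiv_iff (f := (graphEquiv q).toRingEquiv)).symm

lemma graphIdeal_eq_ker_bind₁ (q : τ → MvPolynomial σ R) :
    graphIdeal q = RingHom.ker (bind₁ (Sum.elim X q)) := by
  apply le_antisymm
  · rw [graphIdeal, Ideal.span_le]
    rintro _ ⟨i, rfl⟩
    simp [bind₁_rename, Sum.elim_comp_inl]
  · have mk_eq : Ideal.Quotient.mkₐ R (graphIdeal q) = (Ideal.Quotient.mkₐ R (graphIdeal q)).comp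
        ((rename Sum.inl).comp (bind₁ (Sum.elim X q))) := by
      ext (i | i)
      · simp
      · simpa [Ideal.Quotient.eq] using X_sub_rename_mem_graphIdeal q i
    intro f hf
    rw [← Ideal.Quotient.eq_zero_iff_mem, ← Ideal.Quotient.mkₐ_eq_mk R, mk_eq]
    simp [(RingHom.mem_ker).1 hf]

lemma isAntichain_range_graphIdeal :
    IsAntichain (· ≤ ·) (Set.range (graphIdeal : (τ → MvPolynomial σ R) → _)) := by
  rintro _ ⟨q, rfl⟩ _ ⟨r, rfl⟩ hne hle
  refine hne (congrArg graphIdeal (funext fun i => ?_))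
  have := hle (X_sub_rename_mem_graphIdeal q i)
  rw [graphIdeal_eq_ker_bind₁, RingHom.mem_ker] at this
  simpa [bind₁_rename, Sum.elim_comp_inl, sub_eq_zero, eq_comm] using this

variable [IsDomain R]

lemma isPrime_graphIdeal (q : τ → MvPolynomial σ R) : (graphIdeal q).IsPrime := by
  rw [graphIdeal_eq_ker_bind₁]
  exact RingHom.ker_isPrime _

lemma symbolicPower_graphIdeal (q : τ → MvPolynomial σ R) (n : ℕ) :
    symbolicPower (graphIdeal q) n = graphIdeal q ^ n := by
  ext f
  rw [mem_symbolicPower_iff_of_isPrime (isPrime_graphIdeal q)]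
  constructor
  · rintro ⟨s, hs, hsf⟩
    rw [← pow_one (graphIdeal q), mem_graphIdeal_pow_iff, pow_one] at hs
    rw [mem_graphIdeal_pow_iff, map_mul] at hsf
    exact mem_graphIdeal_pow_iff.2 (mem_pow_idealOfVars_of_mul_mem hs hsf)
  · exact fun hf => ⟨1, (isPrime_graphIdeal q).one_notMem, by rwa [one_mul]⟩

theorem symbolicPower_derksenIdeal_eq_iInf_general {ι : Type*} [Finite ι]
    (q : ι → τ → MvPolynomial σ R) (n : ℕ) :
    symbolicPower (⨅ i, graphIdeal (q i)) n = ⨅ i, graphIdeal (q i) ^ n := by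
  rw [symbolicPower_iInf (fun i => isPrime_graphIdeal (q i))
    (isAntichain_range_graphIdeal.subset (Set.range_comp_subset_range q graphIdeal))]
  simp only [symbolicPower_graphIdeal]

end GraphIdeal

/-- For a finite group `G` acting linearly on `R = K[x₁, …, x_d]`, the `n`-th symbolic
power of the Derksen ideal is `⋂_{g ∈ G} (y₁ - g(x₁), …, y_d - g(x_d))ⁿ`. -/
theorem symbolicPower_derksenIdeal_eq_iInf {K : Type*} [Field K] (d : ℕ) (G : Type*)
    [Group G] [Finite G] [MulSemiringAction G (MvPolynomial (Fin d) K)]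
    (hC : ∀ (g : G) (a : K), g • (C a : MvPolynomial (Fin d) K) = C a)
    (hlin : ∀ (g : G) (i : Fin d), (g • (X i : MvPolynomial (Fin d) K)).IsHomogeneous 1)
    (n : ℕ) (hn : 1 ≤ n) :
    symbolicPower (derksenIdeal K d G) n = ⨅ g : G, derksenComponent K d g ^ n :=
  symbolicPower_derksenIdeal_eq_iInf_general (fun (g : G) (i : Fin d) => g • X i) n
end

section
/- Let K be a field of characteristic different from 2, R = K[x_1, ..., x_d] a polynomial ring, and G = Z/2Z acting linearly on R. Let S = K[x_1, ..., x_d, y_1, ..., y_d] and let I_G be the Derksen ideal of this action. Then I_G^{(n)} = I_G^n for every n ≥ 1. -/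
/-!
The Derksen ideal of a group of order two is an intersection `P ⊓ Q` of two ideals generated by
linear forms. Two subspaces of a vector space are spanned by subsets of a common basis, so after a
linear change of variables `P` and `Q` are generated by sets `s` and `t` of variables. The powers of
such an ideal are cut out by the order of vanishing along it, which is additive on products; hence
`P` is prime and its powers are primary, and localizing at the associated primes of `P ⊓ Q` gives
`(P ⊓ Q)^(n) ≤ P ^ n ⊓ Q ^ n`.

Finally `P ^ n ⊓ Q ^ n ≤ (P ⊓ Q) ^ n` is checked on monomials: a monomial of degree at least `n`
both in the variables of `s` and in those of `t` is a multiple of a product of `n` monomials, each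
of degree one in `s` and in `t`.
-/

open MvPolynomial

/-! ### Symbolic powers of an intersection of two primes -/

section SymbolicPower

variable {A : Type*} [CommRing A] {I P Q : Ideal A} {n : ℕ}

theorem pow_le_symbolicPower (I : Ideal A) (n : ℕ) : I ^ n ≤ symbolicPower I n :=
  le_iInf₂ fun _ _ => Ideal.le_comap_map

theorem symbolicPower_zero (I : Ideal A) : symbolicPower I 0 = ⊤ :=
  top_le_iff.1 (by simpa using pow_le_symbolicPower I 0)

theorem symbolicPower_le_pow [P.IsPrime] (hP : (P ^ n).IsPrimary) (hIP : I ≤ P)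
    (hass : P ∈ associatedPrimes A (A ⧸ I)) : symbolicPower I n ≤ P ^ n := by
  have hn : n ≠ 0 := by
    rintro rfl
    exact hP.ne_top (by rw [pow_zero, Ideal.one_eq_top])
  have hdisj : Disjoint (P.primeCompl : Set A) (P ^ n : Ideal A) :=
    Set.disjoint_left.2 fun _ ha haP => ha (Ideal.pow_le_self hn haP)
  calc symbolicPower I n
      ≤ ((I ^ n).map (algebraMap A (Localization.AtPrime P))).under A := iInf₂_le P hass
    _ ≤ ((P ^ n).map (algebraMap A (Localization.AtPrime P))).under A :=
        Ideal.comap_mono (Ideal.map_mono (Ideal.pow_right_mono hIP n))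
    _ = P ^ n := IsLocalization.under_map_of_isPrimary_disjoint P.primeCompl _ hP hdisj

theorem mem_associatedPrimes_quotient_inf [hP : P.IsPrime] (h : ¬Q ≤ P) :
    P ∈ associatedPrimes A (A ⧸ (P ⊓ Q)) := by
  obtain ⟨c, hcQ, hcP⟩ := SetLike.not_le_iff_exists.1 h
  have hann : (⊥ : Submodule A (A ⧸ (P ⊓ Q))).colon {Ideal.Quotient.mk _ c} = P := by
    ext r
    rw [Submodule.mem_colon_singleton, Submodule.mem_bot, Algebra.smul_def,
      Ideal.Quotient.algebraMap_eq, ← map_mul, Ideal.Quotient.eq_zero_iff_mem]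
    exact ⟨fun hr => (hP.mem_or_mem hr.1).resolve_right hcP,
      fun hr => ⟨P.mul_mem_right _ hr, Q.mul_mem_left _ hcQ⟩⟩
  exact ⟨hP, Ideal.Quotient.mk _ c, by rw [hann, hP.radical]⟩

theorem symbolicPower_eq_pow_of_isPrime [hP : P.IsPrime] (hPn : (P ^ n).IsPrimary) :
    symbolicPower P n = P ^ n := by
  have hass : P ∈ associatedPrimes A (A ⧸ (P ⊓ ⊤)) :=
    mem_associatedPrimes_quotient_inf (top_le_iff.not.2 hP.ne_top)
  rw [inf_top_eq] at hass
  exact (symbolicPower_le_pow hPn le_rfl hass).antisymm (pow_le_symbolicPower P n)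

theorem symbolicPower_inf_eq_pow [P.IsPrime] [Q.IsPrime] (hP : (P ^ n).IsPrimary)
    (hQ : (Q ^ n).IsPrimary) (hPQ : P ^ n ⊓ Q ^ n ≤ (P ⊓ Q) ^ n) :
    symbolicPower (P ⊓ Q) n = (P ⊓ Q) ^ n := by
  by_cases hle : P ≤ Q
  · rw [inf_eq_left.2 hle, symbolicPower_eq_pow_of_isPrime hP]
  by_cases hge : Q ≤ P
  · rw [inf_eq_right.2 hge, symbolicPower_eq_pow_of_isPrime hQ]
  have hassP : P ∈ associatedPrimes A (A ⧸ (P ⊓ Q)) := mem_associatedPrimes_quotient_inf hge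
  have hassQ : Q ∈ associatedPrimes A (A ⧸ (P ⊓ Q)) :=
    inf_comm Q P ▸ mem_associatedPrimes_quotient_inf hle
  refine le_antisymm ?_ (pow_le_symbolicPower _ n)
  exact (le_inf (symbolicPower_le_pow hP inf_le_left hassP)
    (symbolicPower_le_pow hQ inf_le_right hassQ)).trans hPQ

end SymbolicPower

/-! ### Ideals generated by variables -/

section Variables

variable {τ R : Type*} {s t : Set τ} {m : τ →₀ ℕ} {n : ℕ}

/-- The degree of a monomial, given by its exponent, in the variables with index in `s`. It is the
weight giving these variables weight one and all others weight zero, hence additive. -/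
noncomputable def degreeIn (s : Set τ) : (τ →₀ ℕ) →+ ℕ :=
  Finsupp.weight (s.indicator 1)

theorem degreeIn_single_of_mem {i : τ} (hi : i ∈ s) : degreeIn s (Finsupp.single i 1) = 1 := by
  simp [degreeIn, Finsupp.weight_single, hi]

theorem degreeIn_single_of_notMem {i : τ} (hi : i ∉ s) :
    degreeIn s (Finsupp.single i 1) = 0 := by
  simp [degreeIn, Finsupp.weight_single, hi]

theorem one_le_degreeIn_iff : 1 ≤ degreeIn s m ↔ ∃ i ∈ s, m i ≠ 0 := by
  rw [Nat.one_le_iff_ne_zero, ← not_iff_not, not_not, degreeIn, Finsupp.weight_apply, Finsupp.sum,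
    Finset.sum_eq_zero_iff]
  simp only [Finsupp.mem_support_iff, smul_eq_mul, mul_eq_zero, Set.indicator_apply_eq_zero,
    Pi.one_apply, one_ne_zero, imp_false]
  grind

theorem exists_le_degreeIn_eq_one (hs : 1 ≤ degreeIn s m) (ht : 1 ≤ degreeIn t m) :
    ∃ u ≤ m, degreeIn s u = 1 ∧ degreeIn t u = 1 := by
  obtain ⟨i, his, hi⟩ := one_le_degreeIn_iff.1 hs
  obtain ⟨j, hjt, hj⟩ := one_le_degreeIn_iff.1 ht
  have single_le : ∀ {k}, m k ≠ 0 → Finsupp.single k 1 ≤ m := fun hk =>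
    Finsupp.single_le_iff.2 (Nat.one_le_iff_ne_zero.2 hk)
  by_cases hit : i ∈ t
  · exact ⟨_, single_le hi, degreeIn_single_of_mem his, degreeIn_single_of_mem hit⟩
  by_cases hjs : j ∈ s
  · exact ⟨_, single_le hj, degreeIn_single_of_mem hjs, degreeIn_single_of_mem hjt⟩
  have hij : i ≠ j := fun h => hit (h ▸ hjt)
  refine ⟨Finsupp.single i 1 + Finsupp.single j 1, fun k => ?_, ?_, ?_⟩
  · classical
    simp only [Finsupp.add_apply, Finsupp.single_apply]
    grind
  · rw [map_add, degreeIn_single_of_mem his, degreeIn_single_of_notMem hjs]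
  · rw [map_add, degreeIn_single_of_notMem hit, degreeIn_single_of_mem hjt]

section CommSemiring

variable [CommSemiring R]

/-- The order of vanishing of a polynomial along the common zeros of the variables with index
in `s`: the least `degreeIn s` of a monomial of `f`, or `⊤` if `f = 0`. It is computed in the power
series ring, whose orders are additive on products. -/
noncomputable def orderIn (s : Set τ) (f : MvPolynomial τ R) : ℕ∞ :=
  (f : MvPowerSeries τ R).weightedOrder (s.indicator 1)

theorem natCast_le_orderIn_iff {f : MvPolynomial τ R} :
    n ≤ orderIn s f ↔ ∀ m ∈ f.support, n ≤ degreeIn s m := by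
  refine ⟨fun h m hm => ?_, fun h => MvPowerSeries.nat_le_weightedOrder _ fun m hm => ?_⟩
  · rw [mem_support_iff, ← coeff_coe] at hm
    exact_mod_cast h.trans (MvPowerSeries.weightedOrder_le _ hm)
  · rw [coeff_coe, ← notMem_support_iff]
    exact fun hmem => (h m hmem).not_gt hm

theorem orderIn_mul [NoZeroDivisors R] (s : Set τ) (f g : MvPolynomial τ R) :
    orderIn s (f * g) = orderIn s f + orderIn s g := by
  rw [orderIn, coe_mul, MvPowerSeries.weightedOrder_mul, orderIn, orderIn]

/-- The ideal of `R[X_i : i ∈ τ]` generated by the variables with index in `s`, the normal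
form of an ideal generated by linear forms. -/
noncomputable def variableIdeal (R : Type*) [CommSemiring R] (s : Set τ) :
    Ideal (MvPolynomial τ R) :=
  Ideal.span (X '' s)

theorem mem_variableIdeal_iff {f : MvPolynomial τ R} :
    f ∈ variableIdeal R s ↔ 1 ≤ orderIn s f := by
  rw [← Nat.cast_one, natCast_le_orderIn_iff, variableIdeal, mem_ideal_span_X_image]
  exact forall₂_congr fun _ _ => one_le_degreeIn_iff.symm

theorem le_orderIn_of_mem_variableIdeal_pow {f : MvPolynomial τ R}
    (hf : f ∈ variableIdeal R s ^ n) : n ≤ orderIn s f := by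
  induction n generalizing f with
  | zero => simp
  | succ n ih =>
    rw [pow_succ] at hf
    refine Submodule.mul_induction_on hf (fun g hg h hh => ?_) fun g h hg hh => ?_
    · rw [Nat.cast_succ, orderIn, coe_mul]
      exact (add_le_add (ih hg) (mem_variableIdeal_iff.1 hh)).trans
        (MvPowerSeries.le_weightedOrder_mul _)
    · rw [orderIn, coe_add]
      exact (le_min hg hh).trans (MvPowerSeries.min_weightedOrder_le_add _)

theorem monomial_mem_variableIdeal (hm : 1 ≤ degreeIn s m) (a : R) :
    monomial m a ∈ variableIdeal R s := by
  rw [mem_variableIdeal_iff, ← Nat.cast_one, natCast_le_orderIn_iff]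
  intro u hu
  rwa [Finset.mem_singleton.1 (support_monomial_subset hu)]

theorem monomial_mem_inf_variableIdeal_pow (hs : n ≤ degreeIn s m) (ht : n ≤ degreeIn t m)
    (a : R) :
    monomial m a ∈ (variableIdeal R s ⊓ variableIdeal R t) ^ n := by
  induction n generalizing m with
  | zero => simp
  | succ n ih =>
    obtain ⟨u, hum, hus, hut⟩ := exists_le_degreeIn_eq_one (le_of_add_le_right hs)
      (le_of_add_le_right ht)
    obtain ⟨v, rfl⟩ := exists_add_of_le hum
    rw [map_add] at hs ht
    have hu : monomial u (1 : R) ∈ variableIdeal R s ⊓ variableIdeal R t :=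
      ⟨monomial_mem_variableIdeal hus.ge 1, monomial_mem_variableIdeal hut.ge 1⟩
    have hv : monomial v a ∈ (variableIdeal R s ⊓ variableIdeal R t) ^ n :=
      ih (by lia) (by lia)
    simpa only [pow_succ', monomial_mul, one_mul] using Ideal.mul_mem_mul hu hv

theorem mem_inf_variableIdeal_pow {f : MvPolynomial τ R} (hs : n ≤ orderIn s f)
    (ht : n ≤ orderIn t f) : f ∈ (variableIdeal R s ⊓ variableIdeal R t) ^ n := by
  rw [natCast_le_orderIn_iff] at hs ht
  rw [f.as_sum]
  exact Ideal.sum_mem _ fun m hm => monomial_mem_inf_variableIdeal_pow (hs m hm) (ht m hm) _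

theorem mem_variableIdeal_pow_iff {f : MvPolynomial τ R} :
    f ∈ variableIdeal R s ^ n ↔ n ≤ orderIn s f :=
  ⟨le_orderIn_of_mem_variableIdeal_pow, fun h => by simpa using mem_inf_variableIdeal_pow h h⟩

theorem variableIdeal_pow_inf_le (s t : Set τ) (n : ℕ) :
    variableIdeal R s ^ n ⊓ variableIdeal R t ^ n ≤ (variableIdeal R s ⊓ variableIdeal R t) ^ n :=
  fun _ hf => mem_inf_variableIdeal_pow (mem_variableIdeal_pow_iff.1 hf.1)
    (mem_variableIdeal_pow_iff.1 hf.2)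

end CommSemiring

section IsDomain

variable [CommSemiring R] [NoZeroDivisors R] [Nontrivial R]

theorem isPrime_variableIdeal (s : Set τ) : (variableIdeal R s).IsPrime := by
  have one_notMem : (1 : MvPolynomial τ R) ∉ variableIdeal R s := by
    simp [mem_variableIdeal_iff, orderIn]
  refine ⟨(Ideal.ne_top_iff_one _).2 one_notMem, fun {f g} hfg => ?_⟩
  by_contra! h
  simp only [mem_variableIdeal_iff, orderIn_mul, Order.one_le_iff_ne_zero, not_not] at h hfg
  exact hfg (by rw [h.1, h.2, add_zero])

theorem isPrimary_variableIdeal_pow (s : Set τ) (hn : n ≠ 0) :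
    (variableIdeal R s ^ n).IsPrimary := by
  have := isPrime_variableIdeal (R := R) s
  refine Ideal.isPrimary_iff.2 ⟨fun htop => this.ne_top ?_, fun {f g} hfg => ?_⟩
  · exact top_le_iff.1 (htop ▸ Ideal.pow_le_self hn)
  rw [Ideal.radical_pow _ hn, this.radical]
  by_contra! h
  have hg : orderIn s g = 0 := by
    simpa only [mem_variableIdeal_iff, Order.one_le_iff_ne_zero, not_not] using h.2
  rw [mem_variableIdeal_pow_iff, orderIn_mul, hg, add_zero, ← mem_variableIdeal_pow_iff] at hfg
  exact h.1 hfg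

end IsDomain

end Variables

/-! ### Common bases and linear changes of variables -/

theorem linearIndepOn_id_union_of_inf_le_span {R M : Type*} [Ring R] [AddCommGroup M] [Module R M]
    {s t : Set M} (hs : LinearIndepOn R id s) (ht : LinearIndepOn R id t)
    (hst : Submodule.span R s ⊓ Submodule.span R t ≤ Submodule.span R (s ∩ t)) :
    LinearIndepOn R id (s ∪ t) := by
  have hdisj : Disjoint (Submodule.span R (s ∩ t)) (Submodule.span R (t \ s)) := by
    rw [← Set.sdiff_union_inter t s, linearIndepOn_id_union_iff Set.disjoint_sdiff_inter] at ht
    exact Set.inter_comm t s ▸ ht.2.2.symm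
  rw [← Set.union_sdiff_self]
  refine hs.id_union (ht.mono Set.sdiff_subset) (Submodule.disjoint_def.2 fun x hxs hxt => ?_)
  exact Submodule.disjoint_def.1 hdisj x
    (hst ⟨hxs, Submodule.span_mono Set.sdiff_subset hxt⟩) hxt

theorem symbolicPower_map_variableIdeal_inf {τ R A : Type*} [CommRing R] [IsDomain R] [CommRing A]
    (e : MvPolynomial τ R ≃+* A) (s t : Set τ) (n : ℕ) :
    symbolicPower ((variableIdeal R s).map e ⊓ (variableIdeal R t).map e) n =
      ((variableIdeal R s).map e ⊓ (variableIdeal R t).map e) ^ n := by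
  rcases eq_or_ne n 0 with rfl | hn
  · rw [symbolicPower_zero, pow_zero, Ideal.one_eq_top]
  have map_inf (I J : Ideal (MvPolynomial τ R)) : I.map e ⊓ J.map e = (I ⊓ J).map e := by
    simp only [← Ideal.comap_symm, Ideal.comap_inf]
  have := isPrime_variableIdeal (R := R) s
  have := isPrime_variableIdeal (R := R) t
  have isPrimary_map_pow (r : Set τ) : ((variableIdeal R r).map e ^ n).IsPrimary := by
    rw [← Ideal.map_pow, ← Ideal.comap_symm]
    exact (isPrimary_variableIdeal_pow (R := R) r hn).comap (e.symm : A →+* MvPolynomial τ R)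
  refine symbolicPower_inf_eq_pow (isPrimary_map_pow s) (isPrimary_map_pow t) ?_
  simp only [← Ideal.map_pow, map_inf]
  exact Ideal.map_mono (variableIdeal_pow_inf_le s t n)

theorem map_variableIdeal_eq_span {τ R M A : Type*} [CommRing R] [AddCommGroup M] [Module R M]
    [CommRing A] [Algebra R A] {f : M →ₗ[R] A}
    (b : Module.Basis τ R M) (e : MvPolynomial τ R ≃ₐ[R] A) (he : ∀ k, e (X k) = f (b k))
    {r : Set τ} {s : Set M} (hr : Submodule.span R (b '' r) = Submodule.span R s) :
    (variableIdeal R r).map e = Ideal.span (f '' s) := by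
  have himage : e '' (X '' r) = f '' (b '' r) := by
    simp only [Set.image_image, he]
  have span_image (u : Set M) :
      Ideal.span (f '' u) = Ideal.span ((Submodule.span R u).map f : Set A) := by
    rw [Submodule.map_span]
    exact (Submodule.span_span_of_tower R A _).symm
  rw [variableIdeal, Ideal.map_span, himage, span_image, hr, ← span_image]

theorem exists_common_basis {K V : Type*} [DivisionRing K] [AddCommGroup V] [Module K V]
    (N₁ N₂ : Submodule K V) :
    ∃ (B : Set V) (b : Module.Basis B K V) (s t : Set B),
      Submodule.span K (b '' s) = N₁ ∧ Submodule.span K (b '' t) = N₂ := by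
  obtain ⟨B₀, hB₀, -, hspan₀, hind₀⟩ := exists_linearIndepOn_id_extension (K := K)
    (linearIndepOn_empty K id) (Set.empty_subset ((N₁ ⊓ N₂ : Submodule K V) : Set V))
  have extend : ∀ N : Submodule K V, B₀ ⊆ N →
      ∃ B, B₀ ⊆ B ∧ Submodule.span K B = N ∧ LinearIndepOn K id B := fun N hN => by
    obtain ⟨B, hBN, hB, hNB, hind⟩ := exists_linearIndepOn_id_extension hind₀ hN
    exact ⟨B, hB, Submodule.span_eq_of_le N hBN hNB, hind⟩
  obtain ⟨B₁, hB₁, rfl, hind₁⟩ := extend N₁ fun _ hv => (hB₀ hv).1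
  obtain ⟨B₂, hB₂, rfl, hind₂⟩ := extend N₂ fun _ hv => (hB₀ hv).2
  have hind : LinearIndepOn K id (B₁ ∪ B₂) :=
    linearIndepOn_id_union_of_inf_le_span hind₁ hind₂
      (le_trans hspan₀ (Submodule.span_mono (Set.subset_inter hB₁ hB₂)))
  have image_preimage : ∀ C ⊆ B₁ ∪ B₂, Module.Basis.extend hind '' (Subtype.val ⁻¹' C) = C :=
    fun C hC => by
      rw [Module.Basis.coe_extend, Subtype.image_preimage_coe]
      exact Set.inter_eq_right.2 (hC.trans (hind.subset_extend _))
  exact ⟨_, Module.Basis.extend hind, Subtype.val ⁻¹' B₁, Subtype.val ⁻¹' B₂,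
    by rw [image_preimage _ Set.subset_union_left],
    by rw [image_preimage _ Set.subset_union_right]⟩

theorem symbolicPower_inf_span_image {K V A : Type*} [Field K] [AddCommGroup V] [Module K V]
    [CommRing A] [Algebra K A] {f : V →ₗ[K] A}
    (hf : IsSymmetricAlgebra f) (s t : Set V) (n : ℕ) :
    symbolicPower (Ideal.span (f '' s) ⊓ Ideal.span (f '' t)) n =
      (Ideal.span (f '' s) ⊓ Ideal.span (f '' t)) ^ n := by
  obtain ⟨B, b, s', t', hs, ht⟩ := exists_common_basis (Submodule.span K s) (Submodule.span K t)
  let e : MvPolynomial B K ≃ₐ[K] A := (SymmetricAlgebra.equivMvPolynomial b).symm.trans hf.equiv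
  have he (k : B) : e (X k) = f (b k) := by simp [e]
  rw [← map_variableIdeal_eq_span b e he hs, ← map_variableIdeal_eq_span b e he ht]
  exact symbolicPower_map_variableIdeal_inf e.toRingEquiv s' t' n

theorem symbolicPower_inf_span_of_isHomogeneous_one {K σ : Type*} [Field K]
    {s t : Set (MvPolynomial σ K)}
    (hs : ∀ f ∈ s, f.IsHomogeneous 1) (ht : ∀ f ∈ t, f.IsHomogeneous 1) (n : ℕ) :
    symbolicPower (Ideal.span s ⊓ Ideal.span t) n = (Ideal.span s ⊓ Ideal.span t) ^ n := by
  let b : Module.Basis σ K (σ →₀ K) := Finsupp.basisSingleOne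
  have range_constr : (b.constr K X).range = homogeneousSubmodule σ K 1 := by
    rw [Module.Basis.constr_range, homogeneousSubmodule_one_eq_span_X]
  have exists_image_eq (r : Set (MvPolynomial σ K)) (hr : ∀ f ∈ r, f.IsHomogeneous 1) :
      ∃ r', b.constr K X '' r' = r := by
    refine Set.subset_range_iff_exists_image_eq.1 fun f hf => ?_
    rw [← LinearMap.coe_range, range_constr]
    exact hr f hf
  obtain ⟨s', rfl⟩ := exists_image_eq s hs
  obtain ⟨t', rfl⟩ := exists_image_eq t ht
  exact symbolicPower_inf_span_image (SymmetricAlgebra.IsSymmetricAlgebra.mvPolynomial σ b) s' t' n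

theorem symbolicPower_derksenIdeal_Z2_general {K : Type*} [Field K] {d : ℕ} {G : Type*} [Group G]
    [MulSemiringAction G (MvPolynomial (Fin d) K)] (hG : Nat.card G = 2)
    (hlin : ∀ (g : G) (i : Fin d), (g • (X i : MvPolynomial (Fin d) K)).IsHomogeneous 1) (n : ℕ) :
    symbolicPower (derksenIdeal K d G) n = derksenIdeal K d G ^ n := by
  obtain ⟨g, h, -, hgh⟩ := Nat.card_eq_two_iff.1 hG
  have hI : derksenIdeal K d G = derksenComponent K d g ⊓ derksenComponent K d h := by
    rw [derksenIdeal, ← iInf_univ, ← hgh, iInf_pair]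
  have isHomogeneous_generator (g : G) : ∀ f ∈ Set.range fun i : Fin d =>
      X (Sum.inr i) - rename Sum.inl (g • (X i : MvPolynomial (Fin d) K)), f.IsHomogeneous 1 :=
    Set.forall_mem_range.2 fun i => (isHomogeneous_X K _).sub (hlin g i).rename_isHomogeneous
  rw [hI]
  exact symbolicPower_inf_span_of_isHomogeneous_one (isHomogeneous_generator g)
    (isHomogeneous_generator h) n

/-- For `G = ℤ/2ℤ` acting linearly on `K[x₁, …, x_d]` with `char K ≠ 2`, the symbolic
powers of the Derksen ideal coincide with its ordinary powers. -/
theorem symbolicPower_derksenIdeal_Z2 {K : Type*} [Field K] (hchar : ringChar K ≠ 2) (d : ℕ)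
    [MulSemiringAction (Multiplicative (ZMod 2)) (MvPolynomial (Fin d) K)]
    (hC : ∀ (g : Multiplicative (ZMod 2)) (a : K),
      g • (C a : MvPolynomial (Fin d) K) = C a)
    (hlin : ∀ (g : Multiplicative (ZMod 2)) (i : Fin d),
      (g • (X i : MvPolynomial (Fin d) K)).IsHomogeneous 1)
    (n : ℕ) (hn : 1 ≤ n) :
    symbolicPower (derksenIdeal K d (Multiplicative (ZMod 2))) n =
      derksenIdeal K d (Multiplicative (ZMod 2)) ^ n :=
  symbolicPower_derksenIdeal_Z2_general (by simp) hlin n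
end

section
/- Let K be an algebraically closed field, R = K[x_1, ..., x_d] a polynomial ring, and G a finite group acting linearly on R. Let S = K[x_1, ..., x_d, y_1, ..., y_d]. Then the Derksen ideal I_G equals the radical of the ideal of S generated by { f(x_1, ..., x_d) − f(y_1, ..., y_d) : f ∈ R^G }, where R^G is the ring of G-invariant polynomials. -/
/-!
The Derksen component at `g` is the kernel of the map `S → R`, `x ↦ x`, `y ↦ g(x)`, which sends
`f(x) - f(y)` to `f - g(f)`. It is therefore a prime ideal containing `f(x) - f(y)` for every
invariant `f`, which gives one inclusion.

Conversely, if a prime `P` contains all these differences, then the two maps `R → S ⧸ P` given by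
`f ↦ f(x)` and `f ↦ f(y)` agree on `R^G`. Two homomorphisms from `R` to a domain that agree on the
invariants of a finite group differ by an element `g` of the group, so `P` contains the component
at `g`. For a single `b ∈ R` such a `g` comes from the polynomial `∏_g (T - g(b))`, whose
coefficients are invariant; a `g` that serves all of `R` is found by applying this to `R[X]`.
-/

open MvPolynomial

section Invariants

variable {R G D : Type*} [CommRing R] [Group G] [Finite G] [MulSemiringAction G R]
  [CommRing D] [IsDomain D] {α β : R →+* D}

lemma exists_apply_eq_apply_smul_of_eqOn_fixedPoints
    (h : Set.EqOn α β (MulAction.fixedPoints G R)) (b : R) : ∃ g : G, β b = α (g • b) := by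
  cases nonempty_fintype G
  have hmap : (MulSemiringAction.charpoly G b).map α = (MulSemiringAction.charpoly G b).map β := by
    ext n
    simpa only [Polynomial.coeff_map] using h (MulSemiringAction.smul_coeff_charpoly b n)
  have hroot : ((MulSemiringAction.charpoly G b).map α).eval (β b) = 0 := by
    rw [hmap, Polynomial.eval_map_apply, MulSemiringAction.eval_charpoly, map_zero]
  simp only [MulSemiringAction.charpoly_eq, Polynomial.map_prod, Polynomial.eval_prod,
    Finset.prod_eq_zero_iff, Finset.mem_univ, true_and, Polynomial.map_sub, Polynomial.map_X,
    Polynomial.map_C, Polynomial.eval_sub, Polynomial.eval_X, Polynomial.eval_C, sub_eq_zero]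
    at hroot
  exact hroot

theorem exists_eq_comp_toRingHom_of_eqOn_fixedPoints
    (h : Set.EqOn α β (MulAction.fixedPoints G R)) :
    ∃ g : G, β = α.comp (MulSemiringAction.toRingHom G R g) := by
  classical
  by_contra! hne
  have hwitness : ∀ g : G, ∃ b, β b ≠ α (g • b) := fun g ↦ by
    simpa [RingHom.ext_iff] using hne g
  choose b hb using hwitness
  -- A polynomial having all the witnesses `b g` as coefficients refutes every `g` at once.
  let F : Polynomial R := Polynomial.ofFn (Nat.card G) (b ∘ (Finite.equivFin G).symm)
  have hF (g : G) : F.coeff (Finite.equivFin G g) = b g := by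
    simp [F]
  have hpoly : Set.EqOn (Polynomial.mapRingHom α) (Polynomial.mapRingHom β)
      (MulAction.fixedPoints G (Polynomial R)) := fun p hp ↦ by
    ext n
    simpa using h fun g ↦ by rw [← Polynomial.coeff_smul, hp g]
  obtain ⟨g, hg⟩ := exists_apply_eq_apply_smul_of_eqOn_fixedPoints hpoly F
  refine hb g ?_
  simpa [hF] using congr(Polynomial.coeff $hg (Finite.equivFin G g))

end Invariants

lemma span_range_X_inr_sub_rename_inl_eq_ker {A σ τ : Type*} [CommRing A]
    (p : τ → MvPolynomial σ A) :
    Ideal.span (Set.range fun i ↦ X (Sum.inr i) - rename Sum.inl (p i)) =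
      RingHom.ker (aeval (Sum.elim X p) : MvPolynomial (σ ⊕ τ) A →ₐ[A] MvPolynomial σ A) := by
  set I := Ideal.span (Set.range fun i ↦ X (Sum.inr i) - rename Sum.inl (p i))
  apply le_antisymm
  · refine Ideal.span_le.mpr ?_
    rintro _ ⟨i, rfl⟩
    rw [SetLike.mem_coe, RingHom.mem_ker, map_sub, aeval_X, aeval_rename, Sum.elim_inr,
      Sum.elim_comp_inl, aeval_X_left_apply, sub_self]
  · -- Substituting `p i` for `X (Sum.inr i)` changes nothing modulo `I`.
    have hfactor : Ideal.Quotient.mkₐ A I =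
        ((Ideal.Quotient.mkₐ A I).comp (rename Sum.inl)).comp (aeval (Sum.elim X p)) := by
      ext (i | i)
      · simp
      · have hmem : X (Sum.inr i) - rename Sum.inl (p i) ∈ I := Ideal.subset_span ⟨i, rfl⟩
        simpa using Ideal.Quotient.eq.mpr hmem
    intro q hq
    rw [← Ideal.Quotient.eq_zero_iff_mem, ← Ideal.Quotient.mkₐ_eq_mk A, hfactor,
      AlgHom.comp_apply, RingHom.mem_ker.mp hq, map_zero]

lemma aeval_smul_X {A σ G : Type*} [CommSemiring A] [Monoid G]
    [MulSemiringAction G (MvPolynomial σ A)] {g : G}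
    (hC : ∀ c : A, g • (C c : MvPolynomial σ A) = C c) (f : MvPolynomial σ A) :
    aeval (fun i ↦ g • (X i : MvPolynomial σ A)) f = g • f := by
  have heq : (aeval fun i ↦ g • (X i : MvPolynomial σ A) : _ →ₐ[A] _).toRingHom =
      MulSemiringAction.toRingHom G (MvPolynomial σ A) g := by
    ext <;> simp [hC]
  exact RingHom.congr_fun heq f

section DerksenIdeal

variable {K : Type*} [Field K] {d : ℕ} {G : Type*} [Group G]
  [MulSemiringAction G (MvPolynomial (Fin d) K)]

lemma derksenComponent_eq_ker (g : G) :
    derksenComponent K d g = RingHom.ker (aeval (Sum.elim X fun i ↦ g • X i) :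
      MvPolynomial (Fin d ⊕ Fin d) K →ₐ[K] MvPolynomial (Fin d) K) :=
  span_range_X_inr_sub_rename_inl_eq_ker _

lemma isPrime_derksenComponent (g : G) : (derksenComponent K d g).IsPrime := by
  rw [derksenComponent_eq_ker]
  exact RingHom.ker_isPrime _

lemma rename_inl_smul_sub_rename_inr_mem_derksenComponent {g : G}
    (hC : ∀ c : K, g • (C c : MvPolynomial (Fin d) K) = C c) (f : MvPolynomial (Fin d) K) :
    rename Sum.inl (g • f) - rename Sum.inr f ∈ derksenComponent K d g := by
  rw [derksenComponent_eq_ker, RingHom.mem_ker, map_sub, aeval_rename, aeval_rename,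
    Sum.elim_comp_inl, Sum.elim_comp_inr, aeval_X_left_apply, aeval_smul_X hC, sub_self]

lemma exists_derksenComponent_le_of_isPrime [Finite G] {P : Ideal (MvPolynomial (Fin d ⊕ Fin d) K)}
    (hP : P.IsPrime) (hinv : ∀ f : MvPolynomial (Fin d) K, (∀ g : G, g • f = f) →
      rename Sum.inl f - rename Sum.inr f ∈ P) :
    ∃ g : G, derksenComponent K d g ≤ P := by
  obtain ⟨g, hg⟩ := exists_eq_comp_toRingHom_of_eqOn_fixedPoints (G := G)
    (α := (Ideal.Quotient.mk P).comp (rename (R := K) Sum.inl).toRingHom)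
    (β := (Ideal.Quotient.mk P).comp (rename (R := K) Sum.inr).toRingHom)
    fun f hf ↦ Ideal.Quotient.eq.mpr (hinv f hf)
  refine ⟨g, Ideal.span_le.mpr ?_⟩
  rintro _ ⟨i, rfl⟩
  simpa using Ideal.Quotient.eq.mp (RingHom.congr_fun hg (X i))

end DerksenIdeal

theorem derksenIdeal_eq_radical_span_invariants_general {K : Type*} [Field K]
    (d : ℕ) (G : Type*) [Group G] [Finite G]
    [MulSemiringAction G (MvPolynomial (Fin d) K)]
    (hC : ∀ (g : G) (c : K), g • (C c : MvPolynomial (Fin d) K) = C c) :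
    derksenIdeal K d G =
      (Ideal.span {p : MvPolynomial (Fin d ⊕ Fin d) K |
        ∃ f : MvPolynomial (Fin d) K, (∀ g : G, g • f = f) ∧
          p = rename Sum.inl f - rename Sum.inr f}).radical := by
  apply le_antisymm
  · rw [Ideal.radical_eq_sInf]
    refine le_sInf fun P ⟨hJP, hP⟩ ↦ ?_
    obtain ⟨g, hg⟩ := exists_derksenComponent_le_of_isPrime hP
      fun f hf ↦ hJP (Ideal.subset_span ⟨f, hf, rfl⟩)
    exact (iInf_le _ g).trans hg
  · refine le_iInf fun g ↦
      (isPrime_derksenComponent g).isRadical.radical_le_iff.mpr (Ideal.span_le.mpr ?_)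
    rintro _ ⟨f, hf, rfl⟩
    simpa only [hf g, SetLike.mem_coe] using
      rename_inl_smul_sub_rename_inr_mem_derksenComponent (hC g) f

/-- Over an algebraically closed field, the Derksen ideal equals the radical of the ideal
generated by `{ f(x) - f(y) : f ∈ R^G }`. -/
theorem derksenIdeal_eq_radical_span_invariants {K : Type*} [Field K] [IsAlgClosed K]
    (d : ℕ) (G : Type*) [Group G] [Finite G]
    [MulSemiringAction G (MvPolynomial (Fin d) K)]
    (hC : ∀ (g : G) (c : K), g • (C c : MvPolynomial (Fin d) K) = C c)
    (hlin : ∀ (g : G) (i : Fin d), (g • (X i : MvPolynomial (Fin d) K)).IsHomogeneous 1) :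
    derksenIdeal K d G =
      (Ideal.span {p : MvPolynomial (Fin d ⊕ Fin d) K |
        ∃ f : MvPolynomial (Fin d) K, (∀ g : G, g • f = f) ∧
          p = rename Sum.inl f - rename Sum.inr f}).radical :=
  derksenIdeal_eq_radical_span_invariants_general d G hC
end

section
/- Let K be an algebraically closed field and S = K[x_1, ..., x_d, y_1, ..., y_d]. Fix 0 ≤ a ≤ d and integers d_1, ..., d_a ≥ 1 such that the characteristic of K does not divide any d_i. Then the ideal J_a = (y_1^{d_1} − x_1^{d_1}, ..., y_a^{d_a} − x_a^{d_a}, y_{a+1} − x_{a+1}, ..., y_d − x_d) is a radical ideal of S. -/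
open MvPolynomial

/-!
Put `eᵢ = dᵢ` for `i ≤ a` and `eᵢ = 1` for `i > a`, and view `S` as `B[y₁, …, y_d]` over the domain
`B = K[x₁, …, x_d]`. The `i`-th generator is then a monic polynomial `pᵢ(yᵢ)` in one variable, with
`pᵢ = T ^ eᵢ - xᵢ ^ eᵢ` separable over `Frac B`. The leading monomials of the `pᵢ(yᵢ)` are powers of
distinct variables, so division by them reduces any `f` to a remainder of degree less than `deg pᵢ`
in each `yᵢ`. The `pᵢ` have `deg pᵢ` distinct roots in an algebraic closure `L` of `Frac B`, and a
remainder vanishing on the grid of these roots is zero; hence the ideal consists of the `f`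
vanishing on that grid. If `f ^ n` vanishes there, so does `f`, because `L` is reduced.
-/

section ToMvPolynomial

variable {R σ : Type*} [CommSemiring R]

lemma toMvPolynomial_eq_sum_monomial (i : σ) (p : Polynomial R) :
    p.toMvPolynomial i =
      ∑ n ∈ Finset.range (p.natDegree + 1), monomial (Finsupp.single i n) (p.coeff n) := by
  simp_rw [Polynomial.toMvPolynomial, Polynomial.aeval_eq_sum_range, smul_eq_C_mul,
    C_mul_X_pow_eq_monomial]

lemma coeff_single_toMvPolynomial (i : σ) (p : Polynomial R) (n : ℕ) :
    (p.toMvPolynomial i).coeff (Finsupp.single i n) = p.coeff n := by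
  classical
  simp only [toMvPolynomial_eq_sum_monomial, coeff_sum, coeff_monomial,
    (Finsupp.single_injective i).eq_iff, Finset.sum_ite_eq', Finset.mem_range, Nat.lt_succ_iff,
    ite_eq_left_iff, not_le]
  exact fun h => (Polynomial.coeff_eq_zero_of_natDegree_lt h).symm

lemma degree_toMvPolynomial (m : MonomialOrder σ) (i : σ) (p : Polynomial R) :
    m.degree (p.toMvPolynomial i) = Finsupp.single i p.natDegree := by
  obtain rfl | hp := eq_or_ne p 0
  · simp
  refine m.toSyn.injective (le_antisymm ?_ (m.le_degree ?_))
  · rw [toMvPolynomial_eq_sum_monomial]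
    refine m.degree_sum_le.trans (Finset.sup_le fun n hn => (m.degree_monomial_le _).trans ?_)
    exact m.toSyn_monotone
      (Finsupp.single_mono (Nat.lt_succ_iff.mp (Finset.mem_range.mp hn)))
  · rwa [mem_support_iff, coeff_single_toMvPolynomial, Polynomial.coeff_natDegree, ne_eq,
      Polynomial.leadingCoeff_eq_zero]

lemma leadingCoeff_toMvPolynomial (m : MonomialOrder σ) (i : σ) (p : Polynomial R) :
    m.leadingCoeff (p.toMvPolynomial i) = p.leadingCoeff := by
  rw [MonomialOrder.leadingCoeff, degree_toMvPolynomial, coeff_single_toMvPolynomial,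
    Polynomial.leadingCoeff]

end ToMvPolynomial

lemma exists_sub_mem_span_range_toMvPolynomial {R σ : Type*} [CommRing R] {p : σ → Polynomial R}
    (hp : ∀ i, (p i).Monic) (f : MvPolynomial σ R) :
    ∃ r : MvPolynomial σ R,
      f - r ∈ Ideal.span (Set.range fun i => (p i).toMvPolynomial i) ∧
        ∀ c ∈ r.support, ∀ i, c i < (p i).natDegree := by
  obtain ⟨_, _⟩ := exists_wellFoundedGT σ
  obtain ⟨g, r, hf, -, hr⟩ := MonomialOrder.lex.div (b := fun i => (p i).toMvPolynomial i)
    (fun i => by simp only [leadingCoeff_toMvPolynomial, (hp i).leadingCoeff, isUnit_one]) f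
  refine ⟨r, ?_, fun c hc i => ?_⟩
  · rw [sub_eq_of_eq_add hf]
    exact Finsupp.mem_span_range_iff_exists_finsupp.mpr ⟨g, rfl⟩
  · simpa only [degree_toMvPolynomial, Finsupp.single_le_iff, not_le] using hr c hc i

lemma eq_zero_of_eval_zero_at_prod {R σ : Type*} [CommRing R] [IsDomain R]
    {f : MvPolynomial σ R} {T : σ → Finset R} (hdeg : ∀ c ∈ f.support, ∀ i, c i < (T i).card)
    (heval : ∀ t : σ → R, (∀ i, t i ∈ T i) → eval t f = 0) : f = 0 := by
  classical
  by_contra hf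
  obtain ⟨c, hc⟩ := support_nonempty.mpr hf
  have hcard : ∀ i, 0 < (T i).card := fun i => (hdeg c hc i).pos
  choose t₀ ht₀ using fun i => Finset.card_pos.mp (hcard i)
  obtain ⟨s, g, rfl⟩ := exists_finset_rename f
  suffices g = 0 from hf (by rw [this, map_zero])
  refine eq_zero_of_eval_zero_at_prod_finset g (fun i => T i) (fun i => ?_) fun t ht => ?_
  · rw [← degreeOf_rename_of_injective Subtype.val_injective, degreeOf_lt_iff (hcard i)]
    exact fun c hc => hdeg c hc i
  · have hext := heval (fun i => if h : i ∈ s then t ⟨i, h⟩ else t₀ i) fun i => by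
      split_ifs with h
      exacts [ht ⟨i, h⟩, ht₀ i]
    simpa [eval_rename, Function.comp_def] using hext

lemma aeval_eq_zero_of_mem_span_range_toMvPolynomial {R A σ : Type*} [CommSemiring R]
    [CommSemiring A] [Algebra R A] {p : σ → Polynomial R} {t : σ → A}
    (ht : ∀ i, Polynomial.aeval (t i) (p i) = 0)
    {f : MvPolynomial σ R} (hf : f ∈ Ideal.span (Set.range fun i => (p i).toMvPolynomial i)) :
    aeval t f = 0 := by
  suffices h : Ideal.span (Set.range fun i => (p i).toMvPolynomial i) ≤
    RingHom.ker (aeval (R := R) t) from h hf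
  rw [Ideal.span_le]
  rintro _ ⟨i, rfl⟩
  rw [SetLike.mem_coe, RingHom.mem_ker, aeval_toMvPolynomial, ht]

lemma mem_span_range_toMvPolynomial_iff {R L σ : Type*} [CommRing R] [CommRing L] [IsDomain L]
    [Algebra R L] [FaithfulSMul R L] {p : σ → Polynomial R} (hp : ∀ i, (p i).Monic)
    (hroots : ∀ i, ((p i).rootSet L).ncard = (p i).natDegree) {f : MvPolynomial σ R} :
    f ∈ Ideal.span (Set.range fun i => (p i).toMvPolynomial i) ↔
      ∀ t : σ → L, (∀ i, t i ∈ (p i).rootSet L) → aeval t f = 0 := by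
  classical
  have hvanish {g : MvPolynomial σ R} {t : σ → L} (ht : ∀ i, t i ∈ (p i).rootSet L) :=
    aeval_eq_zero_of_mem_span_range_toMvPolynomial (f := g)
      fun i => Polynomial.aeval_eq_zero_of_mem_rootSet (ht i)
  refine ⟨fun hf t ht => hvanish ht hf, fun hf => ?_⟩
  obtain ⟨r, hfr, hr⟩ := exists_sub_mem_span_range_toMvPolynomial hp f
  have hinj := map_injective (σ := σ) _ (FaithfulSMul.algebraMap_injective R L)
  have hr₀ : map (algebraMap R L) r = 0 := by
    refine eq_zero_of_eval_zero_at_prod (T := fun i => ((p i).aroots L).toFinset)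
      (fun c hc i => ?_) fun t ht => ?_
    · rw [← Set.ncard_coe_finset, ← Polynomial.rootSet_def, hroots]
      exact hr c (support_map_subset _ _ hc) i
    · rw [eval_map, ← aeval_def, ← sub_sub_cancel f r, map_sub, hf t ht, hvanish ht hfr, sub_zero]
  rwa [(map_eq_zero_iff _ hinj).mp hr₀, sub_zero] at hfr

lemma ncard_rootSet_eq_natDegree {R L : Type*} [CommRing R] [Field L] [IsAlgClosed L] [Algebra R L]
    {p : Polynomial R} (hp : p.Monic) (hsep : (p.map (algebraMap R L)).Separable) :
    (p.rootSet L).ncard = p.natDegree := by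
  classical
  rw [Polynomial.rootSet_def, Set.ncard_coe_finset,
    Multiset.toFinset_card_of_nodup (Polynomial.nodup_roots hsep),
    ← (IsAlgClosed.splits _).natDegree_eq_card_roots, hp.natDegree_map]

lemma isRadical_span_range_toMvPolynomial {R σ : Type*} [CommRing R] [IsDomain R]
    {p : σ → Polynomial R} (hp : ∀ i, (p i).Monic)
    (hsep : ∀ i, ((p i).map (algebraMap R (FractionRing R))).Separable) :
    (Ideal.span (Set.range fun i => (p i).toMvPolynomial i)).IsRadical := by
  let L := AlgebraicClosure (FractionRing R)
  have : FaithfulSMul R L := FaithfulSMul.trans R (FractionRing R) L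
  have hroots (i : σ) : ((p i).rootSet L).ncard = (p i).natDegree :=
    ncard_rootSet_eq_natDegree (hp i) <| by
      rw [IsScalarTower.algebraMap_eq R (FractionRing R) L, ← Polynomial.map_map]
      exact (hsep i).map
  rintro f ⟨n, hn⟩
  rw [mem_span_range_toMvPolynomial_iff hp hroots] at hn ⊢
  exact fun t ht => eq_zero_of_pow_eq_zero ((map_pow _ f n).symm.trans (hn t ht))

lemma isRadical_span_range_X_pow_sub_C {R σ : Type*} [CommRing R] [IsDomain R] {e : σ → ℕ}
    {a : σ → R} (he : ∀ i, (e i : R) ≠ 0) (ha : ∀ i, a i ≠ 0) :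
    (Ideal.span (Set.range fun i => (X i ^ e i - C (a i) : MvPolynomial σ R))).IsRadical := by
  have he₀ (i : σ) : e i ≠ 0 := fun h => he i (by rw [h, Nat.cast_zero])
  have hinj := FaithfulSMul.algebraMap_injective R (FractionRing R)
  have hsep (i : σ) : ((Polynomial.X ^ e i - Polynomial.C (a i)).map
      (algebraMap R (FractionRing R))).Separable := by
    rw [Polynomial.map_sub, Polynomial.map_pow, Polynomial.map_X, Polynomial.map_C]
    refine Polynomial.separable_X_pow_sub_C _ ?_ ((map_ne_zero_iff _ hinj).mpr (ha i))
    rw [← map_natCast (algebraMap R (FractionRing R))]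
    exact (map_ne_zero_iff _ hinj).mpr (he i)
  simpa only [map_sub, map_pow, Polynomial.toMvPolynomial_X, Polynomial.toMvPolynomial_C] using
    isRadical_span_range_toMvPolynomial (fun i => Polynomial.monic_X_pow_sub_C (a i) (he₀ i)) hsep

theorem span_diagonal_differences_isRadical_general {R σ : Type*} [CommRing R] [IsDomain R]
    {e : σ → ℕ} (he : ∀ i, (e i : R) ≠ 0) :
    (Ideal.span (Set.range fun i : σ =>
      (X (Sum.inr i) : MvPolynomial (σ ⊕ σ) R) ^ e i - X (Sum.inl i) ^ e i)).IsRadical := by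
  -- Swapping the summands makes `y` the outer variables, in which the generators are monic.
  let φ : MvPolynomial (σ ⊕ σ) R ≃ₐ[R] MvPolynomial σ (MvPolynomial σ R) :=
    (renameEquiv R (Equiv.sumComm σ σ)).trans (sumAlgEquiv R σ σ)
  have hcast (i : σ) : (e i : MvPolynomial σ R) ≠ 0 := by
    simpa only [map_natCast, map_zero] using (C_injective σ R).ne (he i)
  have hφ (i : σ) : φ (X (Sum.inr i) ^ e i - X (Sum.inl i) ^ e i) = X i ^ e i - C (X i ^ e i) := by
    simp [φ]
  rw [← Ideal.comap_map_of_bijective φ φ.bijective (I := Ideal.span _), Ideal.map_span,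
    ← Set.range_comp]
  simp only [Function.comp_def, hφ]
  exact (isRadical_span_range_X_pow_sub_C hcast fun i => pow_ne_zero (e i) (X_ne_zero i)).comap φ

/-- In `S = K[x₁, …, x_d, y₁, …, y_d]` over an algebraically closed field (the
`x`-variables indexed by `Sum.inl`, the `y`-variables by `Sum.inr`), with `a ≤ d` and
`d₁, …, d_a ≥ 1` not divisible by the characteristic of `K`, the ideal
`J_a = (y₁^{d₁} - x₁^{d₁}, …, y_a^{d_a} - x_a^{d_a}, y_{a+1} - x_{a+1}, …, y_d - x_d)`
is radical. -/
theorem span_diagonal_differences_isRadical {K : Type*} [Field K] [IsAlgClosed K]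
    (d a : ℕ) (ha : a ≤ d) (di : Fin a → ℕ) (hdi : ∀ i, 1 ≤ di i)
    (hchar : ∀ i, ¬ (ringChar K ∣ di i)) :
    (Ideal.span (Set.range fun i : Fin d =>
      if h : (i : ℕ) < a then
        (X (Sum.inr i) : MvPolynomial (Fin d ⊕ Fin d) K) ^ di ⟨i, h⟩ -
          X (Sum.inl i) ^ di ⟨i, h⟩
      else
        X (Sum.inr i) - X (Sum.inl i))).IsRadical := by
  simpa only [pow_dite, dite_sub_dite, pow_one] using span_diagonal_differences_isRadical_general
    (R := K) (e := fun i : Fin d => if h : (i : ℕ) < a then di ⟨i, h⟩ else 1)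
    fun i => by split_ifs <;> simp [ringChar.spec, hchar]
end

section
/- Let K be an algebraically closed field, R = K[x_1, ..., x_d] a polynomial ring, and G a finite group acting linearly on R, hence on V = K^d, such that every element g ≠ e of G fixes only the origin. For g ∈ G write J_g = (y_1 − g(x_1), ..., y_d − g(x_d)) ⊆ S = K[x_1, ..., x_d, y_1, ..., y_d]. Then for all distinct g, h ∈ G, J_g + J_h = (x_1, ..., x_d, y_1, ..., y_d), the homogeneous maximal ideal of S. -/
/-!
If all `g • xᵢ` and `h • xᵢ` agree at a point, then `g h⁻¹` fixes it, so the linear forms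
`g • xᵢ - h • xᵢ` vanish simultaneously only at the origin. A linear functional `f` killing them
restricts to the linear forms as evaluation at the common zero `(f xⱼ)ⱼ`, hence vanishes there: the
forms `g • xᵢ - h • xᵢ` span all linear forms. They are differences of generators of `J_g` and
`J_h`, so every `xⱼ` lies in `J_g + J_h`, and then so does every `yᵢ ≡ g • xᵢ`.
-/

open MvPolynomial

section LinearForms

variable {σ R K : Type*}

theorem linearMap_apply_eq_eval_of_isHomogeneous_one [CommSemiring R] {p : MvPolynomial σ R}
    (hp : p.IsHomogeneous 1) (f : MvPolynomial σ R →ₗ[R] R) :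
    f p = eval (fun j => f (X j)) p := by
  rw [← mem_homogeneousSubmodule, homogeneousSubmodule_one_eq_span_X] at hp
  refine LinearMap.eqOn_span (f := f) (g := (aeval fun j => f (X j)).toLinearMap) ?_ hp
  rintro _ ⟨j, rfl⟩
  simp only [AlgHom.toLinearMap_apply, aeval_X]

theorem mem_idealOfVars_of_isHomogeneous_one [CommSemiring R] {p : MvPolynomial σ R}
    (hp : p.IsHomogeneous 1) : p ∈ idealOfVars σ R := by
  rw [← mem_homogeneousSubmodule, homogeneousSubmodule_one_eq_span_X] at hp
  exact Submodule.span_le_restrictScalars R _ _ hp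

theorem X_mem_span_of_eval_eq_zero_imp [Field K] {ι : Type*} {ℓ : ι → MvPolynomial σ K}
    (hℓ : ∀ i, (ℓ i).IsHomogeneous 1)
    (hzero : ∀ v : σ → K, (∀ i, eval v (ℓ i) = 0) → v = 0) (j : σ) :
    X j ∈ Submodule.span K (Set.range ℓ) := by
  by_contra hj
  obtain ⟨f, hfj, hf⟩ := Submodule.exists_le_ker_of_notMem hj
  have hv : (fun k => f (X k)) = 0 := hzero _ fun i => by
    rw [← linearMap_apply_eq_eval_of_isHomogeneous_one (hℓ i) f]
    exact hf (Submodule.subset_span (Set.mem_range_self i))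
  exact hfj (congrFun hv j)

end LinearForms

section Action

variable {σ R G : Type*} [CommSemiring R]

theorem eval_smul_eq_eval [Monoid G] [MulSemiringAction G (MvPolynomial σ R)] {g : G}
    (hC : ∀ c : R, g • (C c : MvPolynomial σ R) = C c) (v : σ → R) (p : MvPolynomial σ R) :
    eval v (g • p) = eval (fun i => eval v (g • (X i : MvPolynomial σ R))) p := by
  suffices (eval v).comp (MulSemiringAction.toRingHom G (MvPolynomial σ R) g) =
      eval fun i => eval v (g • (X i : MvPolynomial σ R)) from RingHom.congr_fun this p
  ext <;> simp [hC]

theorem eval_mul_inv_smul_X [Group G] [MulSemiringAction G (MvPolynomial σ R)] {g h : G}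
    (hCg : ∀ c : R, g • (C c : MvPolynomial σ R) = C c)
    (hCh : ∀ c : R, h • (C c : MvPolynomial σ R) = C c) {v : σ → R}
    (hv : ∀ i, eval v (g • (X i : MvPolynomial σ R)) = eval v (h • (X i : MvPolynomial σ R)))
    (i : σ) : eval v ((g * h⁻¹) • (X i : MvPolynomial σ R)) = v i := by
  calc eval v ((g * h⁻¹) • (X i : MvPolynomial σ R))
      = eval v (g • h⁻¹ • (X i : MvPolynomial σ R)) := by rw [mul_smul]
    _ = eval v (h • h⁻¹ • (X i : MvPolynomial σ R)) := by
      rw [eval_smul_eq_eval hCg, eval_smul_eq_eval hCh, funext hv]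
    _ = v i := by rw [smul_inv_smul, eval_X]

end Action

section DerksenComponent

variable {K G : Type*} [Field K] {d : ℕ} [Group G] [MulSemiringAction G (MvPolynomial (Fin d) K)]

theorem X_inr_sub_rename_smul_mem_derksenComponent (g : G) (i : Fin d) :
    X (Sum.inr i) - rename Sum.inl (g • (X i : MvPolynomial (Fin d) K)) ∈
      derksenComponent K d g :=
  Ideal.subset_span (Set.mem_range_self i)

theorem derksenComponent_le_idealOfVars {g : G}
    (hlin : ∀ i : Fin d, (g • (X i : MvPolynomial (Fin d) K)).IsHomogeneous 1) :
    derksenComponent K d g ≤ idealOfVars (Fin d ⊕ Fin d) K := by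
  rw [derksenComponent, Ideal.span_le]
  rintro _ ⟨i, rfl⟩
  exact mem_idealOfVars_of_isHomogeneous_one
    ((isHomogeneous_X K _).sub (hlin i).rename_isHomogeneous)

theorem smul_X_sub_smul_X_mem_comap_sup_derksenComponent (g h : G) (i : Fin d) :
    g • (X i : MvPolynomial (Fin d) K) - h • X i ∈
      (derksenComponent K d g ⊔ derksenComponent K d h).comap (rename Sum.inl) := by
  rw [Ideal.mem_comap, map_sub, ← sub_sub_sub_cancel_left _ _ (X (Sum.inr i))]
  exact Ideal.sub_mem _
    (Ideal.mem_sup_right (X_inr_sub_rename_smul_mem_derksenComponent h i))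
    (Ideal.mem_sup_left (X_inr_sub_rename_smul_mem_derksenComponent g i))

theorem idealOfVars_le_of_derksenComponent_le {g : G}
    {I : Ideal (MvPolynomial (Fin d ⊕ Fin d) K)}
    (hlin : ∀ i : Fin d, (g • (X i : MvPolynomial (Fin d) K)).IsHomogeneous 1)
    (hgI : derksenComponent K d g ≤ I) (hX : ∀ j, X (Sum.inl j) ∈ I) :
    idealOfVars (Fin d ⊕ Fin d) K ≤ I := by
  have hcomap : idealOfVars (Fin d) K ≤ I.comap (rename Sum.inl) := by
    rw [Ideal.span_le]
    rintro _ ⟨j, rfl⟩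
    simpa only [SetLike.mem_coe, Ideal.mem_comap, rename_X] using hX j
  rw [Ideal.span_le]
  rintro _ ⟨j | i, rfl⟩
  · exact hX j
  · simpa using I.add_mem (hgI (X_inr_sub_rename_smul_mem_derksenComponent g i))
      (hcomap (mem_idealOfVars_of_isHomogeneous_one (hlin i)))

theorem derksenComponent_sup_eq_max_general
    (hC : ∀ (g : G) (c : K), g • (C c : MvPolynomial (Fin d) K) = C c)
    (hlin : ∀ (g : G) (i : Fin d), (g • (X i : MvPolynomial (Fin d) K)).IsHomogeneous 1)
    {g h : G}
    (hfix : ∀ v : Fin d → K,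
      (∀ i, eval v ((g * h⁻¹) • (X i : MvPolynomial (Fin d) K)) = v i) → v = 0) :
    derksenComponent K d g ⊔ derksenComponent K d h = idealOfVars (Fin d ⊕ Fin d) K := by
  refine le_antisymm
    (sup_le (derksenComponent_le_idealOfVars (hlin g)) (derksenComponent_le_idealOfVars (hlin h)))
    (idealOfVars_le_of_derksenComponent_le (hlin g) le_sup_left fun j => ?_)
  have hspan : X j ∈ Submodule.span K
      (Set.range fun i => g • (X i : MvPolynomial (Fin d) K) - h • X i) :=
    X_mem_span_of_eval_eq_zero_imp (fun i => (hlin g i).sub (hlin h i)) (fun v hv =>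
      hfix v (eval_mul_inv_smul_X (hC g) (hC h) fun i => sub_eq_zero.1 (by simpa using hv i))) j
  have hle : Submodule.span K (Set.range fun i => g • (X i : MvPolynomial (Fin d) K) - h • X i) ≤
      ((derksenComponent K d g ⊔ derksenComponent K d h).comap (rename Sum.inl)).restrictScalars
        K := by
    rw [Submodule.span_le]
    rintro _ ⟨i, rfl⟩
    exact smul_X_sub_smul_X_mem_comap_sup_derksenComponent g h i
  simpa using hle hspan

end DerksenComponent

/-- If every non-identity element of `G` fixes only the origin, then for distinct
`g, h ∈ G` the sum `J_g + J_h` is the homogeneous maximal ideal of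
`S = K[x₁, …, x_d, y₁, …, y_d]`. -/
theorem derksenComponent_sup_eq_max {K : Type*} [Field K] [IsAlgClosed K]
    (d : ℕ) (G : Type*) [Group G] [Finite G]
    [MulSemiringAction G (MvPolynomial (Fin d) K)]
    (hC : ∀ (g : G) (c : K), g • (C c : MvPolynomial (Fin d) K) = C c)
    (hlin : ∀ (g : G) (i : Fin d), (g • (X i : MvPolynomial (Fin d) K)).IsHomogeneous 1)
    (hfix : ∀ g : G, g ≠ 1 → ∀ v : Fin d → K,
      (∀ i, eval v (g • (X i : MvPolynomial (Fin d) K)) = v i) → v = 0)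
    (g h : G) (hgh : g ≠ h) :
    derksenComponent K d g ⊔ derksenComponent K d h =
      Ideal.span (Set.range (X : Fin d ⊕ Fin d → MvPolynomial (Fin d ⊕ Fin d) K)) :=
  derksenComponent_sup_eq_max_general hC hlin
    (hfix (g * h⁻¹) (mt mul_inv_eq_one.1 hgh))
end
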